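/- arXiv:1707.02338 — 2 statements merged into one kernel-verified Lean document; each statement's English description precedes it below -/
import Mathlib

section
/- For all natural numbers p and q, the geometric algebras G_{p+1,q} and G_{q+1,p} are isomorphic as ℝ-algebras. -/
noncomputable section

/-- The quadratic form of signature `(p, q)` on `Fin (p + q) → ℝ`:
`Q_{p,q}(x) = Σ_{i<p} x_i² − Σ_{p≤i<p+q} x_i²`. -/
def Q (p q : ℕ) : QuadraticForm ℝ (Fin (p + q) → ℝ) :=
  QuadraticMap.weightedSumSquares ℝ (fun i : Fin (p + q) => if (i : ℕ) < p then (1 : ℝ) else -1)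

/-- The geometric algebra `G_{p,q}`, the Clifford algebra of `Q p q`. -/
abbrev G (p q : ℕ) : Type := CliffordAlgebra (Q p q)

theorem key_sq {A : Type*} [Ring A] [Algebra ℝ A] (x e : A) (c a : ℝ)
    (he : e * e = 1) (hx : x * x = algebraMap ℝ A a)
    (hex : e * x = algebraMap ℝ A (2 * c) - x * e) :
    (c • (e - 1) + x * e) * (c • (e - 1) + x * e) = algebraMap ℝ A (2 * c ^ 2 - a) := by
  simp only [Algebra.algebraMap_eq_smul_one] at *
  have h1 : e * (x * e) = (2 * c) • e - x := by
    rw [← mul_assoc, hex, sub_mul, mul_assoc, he, mul_one, smul_mul_assoc, one_mul]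
  have h2 : x * e * e = x := by rw [mul_assoc, he, mul_one]
  have h3 : x * e * (x * e) = (2 * c) • (x * e) - a • 1 := by
    rw [mul_assoc, h1, mul_sub, hx, mul_smul_comm]
  simp only [mul_add, add_mul, smul_mul_assoc, mul_smul_comm, mul_sub, sub_mul, mul_one, one_mul,
    he, h1, h2, h3]
  module

section
variable {M N : Type*} [AddCommGroup M] [Module ℝ M] [AddCommGroup N] [Module ℝ N]

/-- the linear map on generators -/
def genMap (Q₂ : QuadraticForm ℝ N) (e : M →ₗ[ℝ] N) (φ : M →ₗ[ℝ] ℝ) (v : M) :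
    M →ₗ[ℝ] CliffordAlgebra Q₂ :=
  φ.smulRight (CliffordAlgebra.ι Q₂ (e v) - 1) +
    (LinearMap.mulRight ℝ (CliffordAlgebra.ι Q₂ (e v))).comp ((CliffordAlgebra.ι Q₂).comp e)

theorem genMap_apply (Q₂ : QuadraticForm ℝ N) (e : M →ₗ[ℝ] N) (φ : M →ₗ[ℝ] ℝ) (v m : M) :
    genMap Q₂ e φ v m = φ m • (CliffordAlgebra.ι Q₂ (e v) - 1) +
      CliffordAlgebra.ι Q₂ (e m) * CliffordAlgebra.ι Q₂ (e v) := rfl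

theorem genMap_sq (Q₁ : QuadraticForm ℝ M) (Q₂ : QuadraticForm ℝ N) (e : M →ₗ[ℝ] N)
    (φ : M →ₗ[ℝ] ℝ) (v : M) (hv : Q₂ (e v) = 1)
    (hp : ∀ m, QuadraticMap.polar Q₂ (e v) (e m) = 2 * φ m)
    (h : ∀ m, Q₁ m = 2 * φ m ^ 2 - Q₂ (e m)) (m : M) :
    genMap Q₂ e φ v m * genMap Q₂ e φ v m = algebraMap ℝ _ (Q₁ m) := by
  rw [genMap_apply, h]
  apply key_sq
  · rw [CliffordAlgebra.ι_sq_scalar, hv, map_one]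
  · rw [CliffordAlgebra.ι_sq_scalar]
  · rw [CliffordAlgebra.ι_mul_ι_comm, hp]

theorem iso_aux (Q₁ : QuadraticForm ℝ M) (Q₂ : QuadraticForm ℝ N) (e : M ≃ₗ[ℝ] N)
    (φ : M →ₗ[ℝ] ℝ) (v : M) (hφ : φ v = 1) (hv : Q₁ v = 1)
    (hp : ∀ m, QuadraticMap.polar Q₁ v m = 2 * φ m)
    (h : ∀ m, Q₁ m = 2 * φ m ^ 2 - Q₂ (e m)) :
    Nonempty (CliffordAlgebra Q₁ ≃ₐ[ℝ] CliffordAlgebra Q₂) := by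
  have h' : ∀ m, Q₂ (e m) = 2 * φ m ^ 2 - Q₁ m := fun m => by rw [h]; ring
  have hv2 : Q₂ (e v) = 1 := by rw [h', hφ, hv]; norm_num
  have hp2 : ∀ m, QuadraticMap.polar Q₂ (e v) (e m) = 2 * φ m := by
    intro m
    have := hp m
    simp only [QuadraticMap.polar] at this ⊢
    rw [← map_add, h', h', h', map_add, hφ]
    linarith
  have c1 := genMap_sq Q₁ Q₂ (e : M →ₗ[ℝ] N) φ v hv2 hp2 h
  have c2 := genMap_sq Q₂ Q₁ (e.symm : N →ₗ[ℝ] M) (φ.comp (e.symm : N →ₗ[ℝ] M)) (e v)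
    (by simpa using hv) (fun n => by simpa using hp (e.symm n))
    (fun n => by simpa using h' (e.symm n))
  have s1 : CliffordAlgebra.ι Q₁ v * CliffordAlgebra.ι Q₁ v = 1 := by
    rw [CliffordAlgebra.ι_sq_scalar, hv, map_one]
  have s2 : CliffordAlgebra.ι Q₂ (e v) * CliffordAlgebra.ι Q₂ (e v) = 1 := by
    rw [CliffordAlgebra.ι_sq_scalar, hv2, map_one]
  refine ⟨AlgEquiv.ofAlgHom (CliffordAlgebra.lift Q₁ ⟨_, c1⟩) (CliffordAlgebra.lift Q₂ ⟨_, c2⟩)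
    ?_ ?_⟩
  · apply CliffordAlgebra.hom_ext
    ext n
    simp [genMap_apply, hφ, s2, add_mul, sub_mul, mul_assoc, smul_sub]
    abel
  · apply CliffordAlgebra.hom_ext
    ext n
    simp [genMap_apply, hφ, s1, add_mul, sub_mul, mul_assoc, smul_sub]
    abel

end

/-- index bijection -/
def idx (p q : ℕ) (i : Fin (p + 1 + q)) : Fin (q + 1 + p) :=
  if h0 : (i : ℕ) = 0 then ⟨0, by omega⟩
  else if h : (i : ℕ) < p + 1 then ⟨i + q, by omega⟩ else ⟨i - p, by omega⟩

theorem idx_val (p q : ℕ) (i : Fin (p + 1 + q)) : (idx p q i : ℕ) =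
    if (i : ℕ) = 0 then 0 else if (i : ℕ) < p + 1 then (i : ℕ) + q else i - p := by
  unfold idx
  split_ifs <;> rfl

theorem idx_idx (p q : ℕ) (i : Fin (p + 1 + q)) : idx q p (idx p q i) = i := by
  have := i.2
  apply Fin.ext
  rw [idx_val, idx_val]
  split_ifs <;> omega

/-- index equivalence -/
def idxEquiv (p q : ℕ) : Fin (q + 1 + p) ≃ Fin (p + 1 + q) :=
  ⟨idx q p, idx p q, idx_idx q p, idx_idx p q⟩

theorem G_p1q_iso_G_q1p (p q : ℕ) :
    Nonempty (G (p + 1) q ≃ₐ[ℝ] G (q + 1) p) := by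
  let z : Fin (p + 1 + q) := ⟨0, by omega⟩
  have hz : (z : ℕ) < p + 1 := by simp [z]
  refine iso_aux _ _ (LinearEquiv.funCongrLeft ℝ ℝ (idxEquiv p q))
    (LinearMap.proj z) (Pi.single z 1) (by simp) ?_ ?_ ?_
  · simp [Q, QuadraticMap.weightedSumSquares_apply, Pi.single_apply]
    omega
  · intro m
    simp only [Q, QuadraticMap.polar, QuadraticMap.weightedSumSquares_apply,
      ← Finset.sum_sub_distrib]
    rw [Finset.sum_eq_single z]
    · simp [hz]; ring
    · intro b _ hb
      simp [Pi.single_apply, hb]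
    · simp
  · intro m
    have e2 : Q (q + 1) p (LinearEquiv.funCongrLeft ℝ ℝ (idxEquiv p q) m) =
        ∑ i : Fin (p + 1 + q), (if (idx p q i : ℕ) < q + 1 then (1 : ℝ) else -1) • (m i * m i) := by
      rw [← Equiv.sum_comp (idxEquiv p q)]
      simp only [Q, QuadraticMap.weightedSumSquares_apply]
      refine Finset.sum_congr rfl fun i _ => ?_
      have : idx p q (idxEquiv p q i) = i := idx_idx q p i
      rw [this]; rfl
    rw [e2, eq_sub_iff_add_eq]
    simp only [Q, QuadraticMap.weightedSumSquares_apply, ← Finset.sum_add_distrib]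
    rw [Finset.sum_eq_single z]
    · simp [z, idx]; ring
    · intro b _ hb
      have hb' : (b : ℕ) ≠ 0 := fun h => hb (Fin.ext h)
      have := b.2
      by_cases hlt : (b : ℕ) < p + 1
      · have h2 : ¬ ((idx p q b : ℕ) < q + 1) := by rw [idx_val, if_neg hb']; split_ifs; omega
        simp [hlt, h2]
      · have h2 : ((idx p q b : ℕ) < q + 1) := by rw [idx_val, if_neg hb']; split_ifs; omega
        simp only [hlt, h2, if_true, if_false]; simp
    · simp
end
end

section
/- For all natural numbers p and q, the geometric algebra G_{p+4,q+4} is isomorphic as an ℝ-algebra to the algebra of 16×16 matrices with entries in G_{p,q}: G_{p+4,q+4} ≃ₐ[ℝ] Matrix (Fin 16) (Fin 16) G_{p,q}. -/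
noncomputable section

section Aux

/-- `M × ℝ × ℝ` with the hyperbolic plane added. -/
def QH {M : Type} [AddCommGroup M] [Module ℝ M] (R : QuadraticForm ℝ M) :
    QuadraticForm ℝ (M × (ℝ × ℝ)) :=
  R.prod ((QuadraticMap.sq (R := ℝ)).prod (-(QuadraticMap.sq (R := ℝ))))

theorem QH_apply {M : Type} [AddCommGroup M] [Module ℝ M] (R : QuadraticForm ℝ M)
    (x : M × (ℝ × ℝ)) : QH R x = R x.1 + (x.2.1 * x.2.1 - x.2.2 * x.2.2) := by
  simp [QH, sub_eq_add_neg]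

variable {M : Type} [AddCommGroup M] [Module ℝ M] (R : QuadraticForm ℝ M)

open CliffordAlgebra

/-- image of vectors in matrices -/
def fwdLin : M × (ℝ × ℝ) →ₗ[ℝ] Matrix (Fin 2) (Fin 2) (CliffordAlgebra R) where
  toFun x := !![ι R x.1, algebraMap ℝ _ (x.2.1 - x.2.2); algebraMap ℝ _ (x.2.1 + x.2.2), - ι R x.1]
  map_add' x y := by
    ext i j
    fin_cases i <;> fin_cases j <;> simp <;> abel
  map_smul' c x := by
    ext i j
    fin_cases i <;> fin_cases j <;> simp [Algebra.smul_def, mul_sub, mul_add]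

theorem fwdLin_apply (x : M × (ℝ × ℝ)) : fwdLin R x =
    !![ι R x.1, algebraMap ℝ _ (x.2.1 - x.2.2);
      algebraMap ℝ _ (x.2.1 + x.2.2), - ι R x.1] := rfl

theorem fwd_sq (x : M × (ℝ × ℝ)) : fwdLin R x * fwdLin R x = algebraMap ℝ _ (QH R x) := by
  have h := ι_sq_scalar R x.1
  have hc : ∀ r : ℝ, ι R x.1 * algebraMap ℝ _ r = algebraMap ℝ _ r * ι R x.1 :=
    fun r => (Algebra.commutes r _).symm
  rw [fwdLin_apply, Matrix.mul_fin_two, QH_apply, Matrix.algebraMap_eq_diagonal]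
  ext i j
  fin_cases i <;> fin_cases j
  · simp only [h, ← map_mul, ← map_add]; simp only [Matrix.diagonal, Matrix.of_apply]; simp
    simp only [← map_mul, ← map_add, ← map_sub]; congr 1; ring
  · simp only [hc]; simp
  · simp [-map_add, hc]
  · simp only [neg_mul_neg, h, ← map_mul, ← map_add]; simp only [Matrix.diagonal, Matrix.of_apply]; simp
    simp only [← map_mul, ← map_add, ← map_sub]; congr 1; ring

/-- forward map -/
def fwd : CliffordAlgebra (QH R) →ₐ[ℝ] Matrix (Fin 2) (Fin 2) (CliffordAlgebra R) :=
  CliffordAlgebra.lift (QH R) ⟨fwdLin R, fwd_sq R⟩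

theorem fwd_ι (x : M × (ℝ × ℝ)) : fwd R (ι (QH R) x) = fwdLin R x := by
  simp [fwd]

/-- first extra generator -/
def ge : CliffordAlgebra (QH R) := ι (QH R) (0, (1, 0))
/-- second extra generator -/
def gf : CliffordAlgebra (QH R) := ι (QH R) (0, (0, 1))
/-- old vectors -/
def gv (v : M) : CliffordAlgebra (QH R) := ι (QH R) (v, (0, 0))

theorem ge_sq : ge R * ge R = 1 := by
  rw [ge, ι_sq_scalar, QH_apply]; simp
theorem gf_sq : gf R * gf R = -1 := by
  rw [gf, ι_sq_scalar, QH_apply]; simp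
theorem gv_sq (v : M) : gv R v * gv R v = algebraMap ℝ _ (R v) := by
  rw [gv, ι_sq_scalar, QH_apply]; simp
theorem anti (x y : M × (ℝ × ℝ)) (h : QH R (x + y) = QH R x + QH R y) :
    ι (QH R) x * ι (QH R) y = - (ι (QH R) y * ι (QH R) x) :=
  ι_mul_ι_comm_of_isOrtho h
theorem gf_ge : gf R * ge R = - (ge R * gf R) := by
  apply anti; simp [QH_apply]
theorem ge_gv (v : M) : ge R * gv R v = - (gv R v * ge R) := by
  apply anti; simp [QH_apply, add_comm]
theorem gf_gv (v : M) : gf R * gv R v = - (gv R v * gf R) := by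
  apply anti; simp [QH_apply, add_comm]

/-- `ω = e f`. -/
def gw : CliffordAlgebra (QH R) := ge R * gf R

theorem gw_sq : gw R * gw R = 1 := by
  rw [gw, mul_assoc, ← mul_assoc (gf R), gf_ge, neg_mul, mul_assoc, gf_sq, mul_neg, mul_neg, mul_one,
    mul_neg, neg_neg, ge_sq]
theorem ge_gw : ge R * gw R = gf R := by rw [gw, ← mul_assoc, ge_sq, one_mul]
theorem gw_ge : gw R * ge R = - gf R := by
  rw [gw, mul_assoc, gf_ge, mul_neg, ← mul_assoc, ge_sq, one_mul]
theorem gw_gv (v : M) : gw R * gv R v = gv R v * gw R := by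
  rw [gw, mul_assoc, gf_gv, mul_neg, ← mul_assoc, ge_gv, neg_mul, neg_neg, mul_assoc]

/-- linear part of the embedding of the old algebra -/
def phiLin : M →ₗ[ℝ] CliffordAlgebra (QH R) :=
  (LinearMap.mulRight ℝ (gw R)) ∘ₗ (ι (QH R)) ∘ₗ (LinearMap.inl ℝ M (ℝ × ℝ))

theorem phiLin_apply (v : M) : phiLin R v = gv R v * gw R := rfl

/-- embedding of the old algebra -/
def phi : CliffordAlgebra R →ₐ[ℝ] CliffordAlgebra (QH R) :=
  CliffordAlgebra.lift R ⟨phiLin R, fun v => by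
    rw [phiLin_apply, mul_assoc, ← mul_assoc (gw R), gw_gv, mul_assoc, gw_sq, mul_one, gv_sq]⟩

theorem phi_ι (v : M) : phi R (ι R v) = gv R v * gw R := by
  simp [phi, phiLin_apply]

theorem phi_comm_of (z : CliffordAlgebra (QH R))
    (hz : ∀ v, z * (gv R v * gw R) = (gv R v * gw R) * z) (c : CliffordAlgebra R) :
    z * phi R c = phi R c * z := by
  induction c using CliffordAlgebra.induction with
  | algebraMap r => rw [AlgHom.commutes]; exact (Algebra.commutes r z).symm
  | ι v => rw [phi_ι]; exact hz v
  | mul a b ha hb => rw [map_mul, ← mul_assoc, ha, mul_assoc, hb, mul_assoc]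
  | add a b ha hb => rw [map_add, mul_add, ha, hb, add_mul]

theorem ge_phi (c : CliffordAlgebra R) : ge R * phi R c = phi R c * ge R := by
  apply phi_comm_of
  intro v
  rw [← mul_assoc, ge_gv, neg_mul, mul_assoc, ge_gw, mul_assoc, gw_ge, mul_neg]

theorem gw_phi (c : CliffordAlgebra R) : gw R * phi R c = phi R c * gw R := by
  apply phi_comm_of
  intro v
  rw [← mul_assoc, gw_gv]

/-- idempotent -/
def gP : CliffordAlgebra (QH R) := (1 / 2 : ℝ) • (1 + gw R)
/-- idempotent -/
def gN : CliffordAlgebra (QH R) := (1 / 2 : ℝ) • (1 - gw R)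

theorem gP_gP : gP R * gP R = gP R := by
  simp only [gP, smul_mul_smul_comm, mul_add, add_mul, gw_sq, one_mul, mul_one]
  module
theorem gN_gN : gN R * gN R = gN R := by
  simp only [gN, smul_mul_smul_comm, mul_sub, sub_mul, gw_sq, one_mul, mul_one]
  module
theorem gP_gN : gP R * gN R = 0 := by
  simp only [gP, gN, smul_mul_smul_comm, mul_sub, add_mul, gw_sq, one_mul, mul_one]
  module
theorem gN_gP : gN R * gP R = 0 := by
  simp only [gP, gN, smul_mul_smul_comm, mul_add, sub_mul, gw_sq, one_mul, mul_one]
  module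
theorem gP_ge : gP R * ge R = ge R * gN R := by
  simp only [gP, gN, smul_mul_assoc, mul_smul_comm, mul_sub, add_mul, gw_ge, ge_gw, one_mul, mul_one]
  module
theorem gN_ge : gN R * ge R = ge R * gP R := by
  simp only [gP, gN, smul_mul_assoc, mul_smul_comm, mul_add, sub_mul, gw_ge, ge_gw, one_mul, mul_one]
  module
theorem gP_add_gN : gP R + gN R = 1 := by
  simp only [gP, gN]; module
theorem gP_phi (c : CliffordAlgebra R) : gP R * phi R c = phi R c * gP R := by
  simp only [gP, smul_mul_assoc, mul_smul_comm, mul_add, add_mul, gw_phi, one_mul, mul_one]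
theorem gN_phi (c : CliffordAlgebra R) : gN R * phi R c = phi R c * gN R := by
  simp only [gN, smul_mul_assoc, mul_smul_comm, mul_sub, sub_mul, gw_phi, one_mul, mul_one]

/-- matrix units -/
def gE : Matrix (Fin 2) (Fin 2) (CliffordAlgebra (QH R)) :=
  !![gP R, gP R * ge R; gN R * ge R, gN R]

theorem gE_phi (i j : Fin 2) (c : CliffordAlgebra R) : gE R i j * phi R c = phi R c * gE R i j := by
  fin_cases i <;> fin_cases j <;>
    simp [gE, mul_assoc, ge_phi, gP_phi, gN_phi] <;> simp only [← mul_assoc, gP_phi, gN_phi]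

theorem gE_mul (i j k l : Fin 2) : gE R i j * gE R k l = if j = k then gE R i l else 0 := by
  have h1 : ∀ z, gP R * (gP R * z) = gP R * z := fun z => by rw [← mul_assoc, gP_gP]
  have h2 : ∀ z, gN R * (gN R * z) = gN R * z := fun z => by rw [← mul_assoc, gN_gN]
  have h3 : ∀ z, gP R * (gN R * z) = 0 := fun z => by rw [← mul_assoc, gP_gN, zero_mul]
  have h4 : ∀ z, gN R * (gP R * z) = 0 := fun z => by rw [← mul_assoc, gN_gP, zero_mul]
  have h5 : ge R * gP R = gN R * ge R := (gN_ge R).symm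
  have h6 : ge R * gN R = gP R * ge R := (gP_ge R).symm
  have h7 : ∀ z, ge R * (gP R * z) = gN R * (ge R * z) := fun z => by
    rw [← mul_assoc, h5, mul_assoc]
  have h8 : ∀ z, ge R * (gN R * z) = gP R * (ge R * z) := fun z => by
    rw [← mul_assoc, h6, mul_assoc]
  fin_cases i <;> fin_cases j <;> fin_cases k <;> fin_cases l <;>
    simp [gE, mul_assoc, h1, h2, h3, h4, h5, h6, h7, h8, gP_gP, gN_gN, gP_gN, gN_gP, ge_sq]

/-- backward map, linear -/
def bwdLin : Matrix (Fin 2) (Fin 2) (CliffordAlgebra R) →ₗ[ℝ] CliffordAlgebra (QH R) where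
  toFun m := ∑ i, ∑ j, phi R (m i j) * gE R i j
  map_add' x y := by simp [add_mul]; abel
  map_smul' c x := by simp

theorem bwdLin_apply (m : Matrix (Fin 2) (Fin 2) (CliffordAlgebra R)) :
    bwdLin R m = ∑ i, ∑ j, phi R (m i j) * gE R i j := rfl

/-- backward map -/
def bwd : Matrix (Fin 2) (Fin 2) (CliffordAlgebra R) →ₐ[ℝ] CliffordAlgebra (QH R) :=
  AlgHom.ofLinearMap (bwdLin R)
    (by rw [bwdLin_apply]; simp [Fin.sum_univ_two, gE, gP_add_gN])
    (by
      intro x y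
      have key : ∀ (a b : CliffordAlgebra R) (i j k l : Fin 2),
          (phi R a * gE R i j) * (phi R b * gE R k l) =
            phi R (a * b) * (if j = k then gE R i l else 0) := by
        intro a b i j k l
        rw [mul_assoc, ← mul_assoc (gE R i j), gE_phi, mul_assoc, gE_mul, map_mul, mul_assoc]
      simp only [bwdLin_apply, Fin.sum_univ_two, mul_add, add_mul, key, Matrix.mul_apply, map_add]
      simp
      abel)

theorem bwd_apply (m : Matrix (Fin 2) (Fin 2) (CliffordAlgebra R)) :
    bwd R m = ∑ i, ∑ j, phi R (m i j) * gE R i j := rfl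

theorem bwd_fwd : (bwd R).comp (fwd R) = AlgHom.id ℝ _ := by
  apply CliffordAlgebra.hom_ext
  ext x
  · simp [fwd_ι, fwdLin_apply, bwd_apply, Fin.sum_univ_two, phi_ι, gE]
    change _ = gv R x
    rw [← sub_eq_add_neg, ← mul_sub]
    have : gP R - gN R = gw R := by simp only [gP, gN]; module
    rw [this, mul_assoc, gw_sq, mul_one]
  · simp [fwd_ι, fwdLin_apply, bwd_apply, Fin.sum_univ_two, phi_ι, gE]
    change _ = ge R
    rw [← add_mul, gP_add_gN, one_mul]
  · simp [fwd_ι, fwdLin_apply, bwd_apply, Fin.sum_univ_two, phi_ι, gE]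
    change _ = gf R
    rw [gP_ge, gN_ge]
    have : gP R - gN R = gw R := by simp only [gP, gN]; module
    rw [neg_add_eq_sub, ← mul_sub, this, ge_gw]

theorem fwd_ge : fwd R (ge R) = !![0, 1; 1, 0] := by
  simp [ge, fwd_ι, fwdLin_apply]
theorem fwd_gf : fwd R (gf R) = !![0, -1; 1, 0] := by
  simp [gf, fwd_ι, fwdLin_apply]
theorem fwd_gw : fwd R (gw R) = !![1, 0; 0, -1] := by
  rw [gw, map_mul, fwd_ge, fwd_gf, Matrix.mul_fin_two]; simp
theorem fwd_gP : fwd R (gP R) = !![1, 0; 0, 0] := by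
  rw [gP, map_smul, map_add, map_one, fwd_gw, Matrix.one_fin_two]
  ext i j
  fin_cases i <;> fin_cases j <;> simp
  rw [← two_smul ℝ, smul_smul]; norm_num
theorem fwd_gN : fwd R (gN R) = !![0, 0; 0, 1] := by
  rw [gN, map_smul, map_sub, map_one, fwd_gw, Matrix.one_fin_two]
  ext i j
  fin_cases i <;> fin_cases j <;> simp
  rw [← two_smul ℝ, smul_smul]; norm_num

theorem fwd_phi (c : CliffordAlgebra R) : fwd R (phi R c) = !![c, 0; 0, c] := by
  induction c using CliffordAlgebra.induction with
  | algebraMap r =>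
    rw [AlgHom.commutes, AlgHom.commutes, Matrix.algebraMap_eq_diagonal]
    ext i j
    fin_cases i <;> fin_cases j <;> simp
  | ι v =>
    rw [phi_ι, map_mul, fwd_gw, gv, fwd_ι, fwdLin_apply, Matrix.mul_fin_two]; simp
  | mul a b ha hb => rw [map_mul, map_mul, ha, hb, Matrix.mul_fin_two]; simp
  | add a b ha hb =>
    rw [map_add, map_add, ha, hb]
    ext i j
    fin_cases i <;> fin_cases j <;> simp

theorem fwd_bwd : (fwd R).comp (bwd R) = AlgHom.id ℝ _ := by
  apply AlgHom.ext
  intro m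
  simp only [AlgHom.comp_apply, bwd_apply, Fin.sum_univ_two, map_add, map_mul, gE, fwd_phi]
  simp [fwd_gP, fwd_gN, fwd_ge]
  ext i j
  fin_cases i <;> fin_cases j <;> simp

/-- `Cl(R ⊕ H) ≃ M₂(Cl R)`. -/
def hypEquiv : CliffordAlgebra (QH R) ≃ₐ[ℝ] Matrix (Fin 2) (Fin 2) (CliffordAlgebra R) :=
  AlgEquiv.ofAlgHom (fwd R) (bwd R) (fwd_bwd R) (bwd_fwd R)

theorem dim_eq (p q : ℕ) : p + 1 + (q + 1) = (p + q) + 1 + 1 := by omega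

/-- splitting off the first and the last coordinate -/
def splitEquiv (p q : ℕ) : (Fin (p + 1 + (q + 1)) → ℝ) ≃ₗ[ℝ] (Fin (p + q) → ℝ) × (ℝ × ℝ) where
  toFun x := (fun i => x (Fin.cast (dim_eq p q).symm i.succ.castSucc),
    (x (Fin.cast (dim_eq p q).symm (Fin.castSucc 0)), x (Fin.cast (dim_eq p q).symm (Fin.last _))))
  map_add' _ _ := rfl
  map_smul' _ _ := rfl
  invFun y := fun j => Fin.snoc (α := fun _ => ℝ) (Fin.cons (α := fun _ => ℝ) y.2.1 y.1) y.2.2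
    (Fin.cast (dim_eq p q) j)
  left_inv x := by
    funext j
    obtain ⟨k, rfl⟩ : ∃ k, j = Fin.cast (dim_eq p q).symm k := ⟨Fin.cast (dim_eq p q) j, rfl⟩
    refine Fin.lastCases ?_ (fun k => ?_) k
    · simp only [Fin.cast_cast, Fin.cast_eq_self, Fin.snoc_last]
    · refine Fin.cases ?_ (fun k => ?_) k
      · simp only [Fin.cast_cast, Fin.cast_eq_self, Fin.snoc_castSucc, Fin.cons_zero]
      · simp only [Fin.cast_cast, Fin.cast_eq_self, Fin.snoc_castSucc, Fin.cons_succ]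
  right_inv y := by
    simp only [Fin.cast_cast, Fin.cast_eq_self, Fin.snoc_castSucc, Fin.cons_succ, Fin.cons_zero,
      Fin.snoc_last]

/-- isometry -/
def isoQ (p q : ℕ) : (Q (p + 1) (q + 1)).IsometryEquiv (QH (Q p q)) where
  __ := splitEquiv p q
  map_app' x := by
    change QH (Q p q) (splitEquiv p q x) = _
    rw [QH_apply]
    simp only [Q, QuadraticMap.weightedSumSquares_apply]
    rw [← Equiv.sum_comp (finCongr (dim_eq p q).symm), Fin.sum_univ_castSucc, Fin.sum_univ_succ]
    have h : ¬ (p + q < p) := by omega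
    simp only [splitEquiv, finCongr_apply, LinearEquiv.coe_mk, LinearMap.coe_mk, AddHom.coe_mk,
      Fin.val_cast, Fin.val_castSucc, Fin.val_last, Fin.val_succ, Fin.val_zero, if_neg h,
      add_lt_add_iff_right, Nat.zero_lt_succ, if_true, one_smul, neg_smul]
    ring

/-- one step -/
def stepEquiv (p q : ℕ) : G (p + 1) (q + 1) ≃ₐ[ℝ] Matrix (Fin 2) (Fin 2) (G p q) :=
  (CliffordAlgebra.equivOfIsometry (isoQ p q)).trans (hypEquiv (Q p q))

theorem iter_step (p q p' q' n m : ℕ) (e : G p' q' ≃ₐ[ℝ] Matrix (Fin n) (Fin n) (G p q))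
    (h : m = 2 * n) :
    Nonempty (G (p' + 1) (q' + 1) ≃ₐ[ℝ] Matrix (Fin m) (Fin m) (G p q)) := by
  subst h
  exact ⟨((stepEquiv p' q').trans e.mapMatrix).trans
    ((Matrix.compAlgEquiv (Fin 2) (Fin n) (G p q) ℝ).trans
      (Matrix.reindexAlgEquiv ℝ (G p q) finProdFinEquiv))⟩

end Aux

theorem G_p4q4_iso_matrix16 (p q : ℕ) :
    Nonempty (G (p + 4) (q + 4) ≃ₐ[ℝ] Matrix (Fin 16) (Fin 16) (G p q)) := by
  obtain ⟨e2⟩ := iter_step p q _ _ 2 4 (stepEquiv p q) rfl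
  obtain ⟨e3⟩ := iter_step p q _ _ 4 8 e2 rfl
  exact iter_step p q _ _ 8 16 e3 rfl
end
end
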